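/- Let d_1, …, d_k ≥ 0 and ρ ≥ 0 be given, let m₀ be the number of indices j with d_j ≤ ρ, and define F(σ) = Σ_{j=1}^k exp(−max(0, d_j − ρ)/σ) for σ > 0. If m₀ < log₂(k) < k, then there exists a unique σ* > 0 such that F(σ*) = log₂(k); that is, the UMAP normalization equation Σ_{j=1}^k ω(x_i, x_j) = log₂(k) has exactly one solution σ_i > 0. -/

import Mathlib

/-- For distances `d j ≥ 0` and `ρ ≥ 0`, with `m₀` the number of indices `j` with `d j ≤ ρ`
and `F(σ) = Σ_j exp(−max(0, d j − ρ)/σ)`: if `m₀ < log₂ k < k` then there is a unique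
`σ* > 0` with `F(σ*) = log₂ k`. -/
theorem umap_normalization_unique_solution (k : ℕ) (d : Fin k → ℝ) (hd : ∀ j, 0 ≤ d j)
    (ρ : ℝ) (hρ : 0 ≤ ρ)
    (h1 : ((Finset.univ.filter (fun j => d j ≤ ρ)).card : ℝ) < Real.logb 2 k)
    (h2 : Real.logb 2 k < (k : ℝ)) :
    ∃! σ : ℝ, 0 < σ ∧
      ∑ j, Real.exp (-(max 0 (d j - ρ)) / σ) = Real.logb 2 k := by
  generalize Real.logb 2 k = L at h1 h2 ⊢
  let G : ℝ → ℝ := fun t => ∑ j, Real.exp (-(max 0 (d j - ρ)) * t)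
  have hG0 : G 0 = k := by simp [G]
  have hcont : Continuous G := by
    dsimp only [G]
    fun_prop
  have hlim : Filter.Tendsto G Filter.atTop
      (nhds ((Finset.univ.filter (fun j => d j ≤ ρ)).card : ℝ)) := by
    have e : ((Finset.univ.filter (fun j => d j ≤ ρ)).card : ℝ)
        = ∑ j, if d j ≤ ρ then (1 : ℝ) else 0 := by simp
    rw [e]
    refine tendsto_finsetSum _ fun j _ => ?_
    split_ifs with h
    · rw [max_eq_left (by linarith)]
      simp
    · push Not at h
      rw [max_eq_right (by linarith)]
      exact Real.tendsto_exp_atBot.comp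
        (Filter.tendsto_id.const_mul_atTop_of_neg (by linarith))
  have hanti : StrictAnti G := by
    obtain ⟨i, hi⟩ : ∃ i, ρ < d i := by
      by_contra! hcon
      have : Finset.univ.filter (fun j => d j ≤ ρ) = Finset.univ :=
        Finset.filter_true_of_mem fun j _ => hcon j
      rw [this] at h1
      simp at h1
      linarith
    intro s t hst
    refine Finset.sum_lt_sum (fun j _ => ?_) ⟨i, Finset.mem_univ i, ?_⟩
    · apply Real.exp_le_exp.2
      nlinarith [le_max_left 0 (d j - ρ)]
    · apply Real.exp_lt_exp.2
      rw [max_eq_right (by linarith)]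
      nlinarith
  obtain ⟨T, hT, hT0⟩ :=
    ((hlim.eventually (gt_mem_nhds h1)).and (Filter.eventually_ge_atTop 0)).exists
  obtain ⟨t, ht, htL⟩ := intermediate_value_Icc' hT0 hcont.continuousOn
    ⟨hT.le, by rw [hG0]; exact h2.le⟩
  have htpos : 0 < t := by
    refine lt_of_le_of_ne ht.1 ?_
    rintro rfl
    linarith
  refine ⟨t⁻¹, ⟨inv_pos.2 htpos, ?_⟩, ?_⟩
  · simpa [G, div_eq_mul_inv] using htL
  · rintro s ⟨_, hs⟩
    have : G s⁻¹ = G t := by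
      rw [htL, ← hs]
      simp [G, div_eq_mul_inv]
    rw [← hanti.injective this, inv_inv]
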